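/- Let P and P' be Fourier multipliers with symbols φ, φ' ∈ C_c^∞(ℝ²), with φ' not identically zero. Suppose there exists C > 0 such that Σ_{n∈ℤ} ‖(e^{inΔ} P f)(e^{inΔ} P' g)‖_{L^∞(ℝ²)} ≤ C ‖f‖_{L²(ℝ²)} ‖g‖_{L²(ℝ²)} for all Schwartz f, g. Then there exists C' > 0 such that for every Schwartz function f, (Σ_{n∈ℤ} ‖e^{inΔ} P f‖_{L^∞(ℝ²)}²)^{1/2} ≤ C' ‖f‖_{L²(ℝ²)}. -/

import Mathlib

open MeasureTheory Complex FourierTransform RealInnerProductSpace SchwartzMap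
open scoped ENNReal

noncomputable section

/-- The Euclidean plane `ℝ²`. -/
abbrev E2 := EuclideanSpace ℝ (Fin 2)

/-- `φ` is a `C^∞_0(ℝ²)` symbol: smooth and compactly supported. -/
def IsCinfc (φ : E2 → ℂ) : Prop := ContDiff ℝ (⊤ : ℕ∞) φ ∧ HasCompactSupport φ

/-- The convolution kernel of `e^{itΔ} P`, where `P` is the Fourier multiplier with symbol `φ`:
`K_t(z) = ∫ φ(ξ) e^{-4π² i t |ξ|²} e^{2πi z·ξ} dξ`. -/
def schrodingerKernel (φ : E2 → ℂ) (t : ℝ) (z : E2) : ℂ :=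
  ∫ ξ : E2, φ ξ *
    Complex.exp (Complex.I *
      ((2 * Real.pi * ⟪z, ξ⟫ - 4 * Real.pi ^ 2 * t * ‖ξ‖ ^ 2 : ℝ) : ℂ))

/-- `e^{itΔ} P f (x)`, realized for `f ∈ L²(ℝ²)` as the convolution of `f` with the
(rapidly decreasing) kernel of `e^{itΔ} P`. -/
def schrodingerProp (φ : E2 → ℂ) (t : ℝ) (f : E2 → ℂ) (x : E2) : ℂ :=
  ∫ y : E2, schrodingerKernel φ t (x - y) * f y

/-!
By Plancherel, `e^{inΔ} P' g (x)` is the inner product of `ĝ` with a vector whose `L²` norm is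
`‖φ'‖₂` for every `n` and `x`. For a fixed `f` put `u n = e^{inΔ} P f` and choose a sampling point
`x n` for each `n`. The bilinear bound says that the multiples `v n` of these vectors by
`conj (u n (x n))` satisfy `∑ |⟪v n, ĝ⟫| ≤ C ‖f‖₂ ‖ĝ‖₂` for all `g`. In a Hilbert space this forces
`∑ ‖v n‖² ≤ (C ‖f‖₂)²`, by a choice of signs. Since `‖v n‖ = |u n (x n)| ‖φ'‖₂`, taking the supremum
over the sampling points gives the linear bound with constant `C / ‖φ'‖₂`.
-/

section HilbertSpace

variable {ι V : Type*} [SeminormedAddCommGroup V]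

lemma exists_signs_sum_norm_sq_le (𝕜 : Type*) [RCLike 𝕜] [InnerProductSpace 𝕜 V]
    (S : Finset ι) (v : ι → V) :
    ∃ ε : ι → ℤˣ, ∑ i ∈ S, ‖v i‖ ^ 2 ≤ ‖∑ i ∈ S, ε i • v i‖ ^ 2 := by
  classical
  induction S using Finset.induction_on with
  | empty => simp
  | insert a S ha ih =>
    obtain ⟨ε, hε⟩ := ih
    have sum_update (s : ℤˣ) : ∑ i ∈ insert a S, Function.update ε a s i • v i =
        s • v a + ∑ i ∈ S, ε i • v i := by
      rw [Finset.sum_insert ha, Function.update_self]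
      congr 1
      refine Finset.sum_congr rfl fun i hi => ?_
      rw [Function.update_of_ne (ne_of_mem_of_not_mem hi ha)]
    suffices ∃ s : ℤˣ, ‖v a‖ ^ 2 + ∑ i ∈ S, ‖v i‖ ^ 2 ≤ ‖s • v a + ∑ i ∈ S, ε i • v i‖ ^ 2 by
      obtain ⟨s, hs⟩ := this
      exact ⟨Function.update ε a s, by rwa [sum_update, Finset.sum_insert ha]⟩
    have parallelogram := parallelogram_law_with_norm 𝕜 (∑ i ∈ S, ε i • v i) (v a)
    by_contra! h
    have h_add := h 1
    have h_sub := h (-1)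
    rw [one_smul, add_comm (v a)] at h_add
    rw [Units.neg_smul, one_smul, neg_add_eq_sub] at h_sub
    linarith

variable {𝕜 : Type*} [RCLike 𝕜] [InnerProductSpace 𝕜 V]

lemma norm_inner_units_zsmul_left (s : ℤˣ) (v w : V) : ‖inner 𝕜 (s • v) w‖ = ‖inner 𝕜 v w‖ := by
  rcases Int.units_eq_one_or s with rfl | rfl <;> simp

/- For suitable signs `w = ∑ ε i • v i` has `∑ ‖v i‖² ≤ ‖w‖²`; testing `h` on `w` itself gives
`‖w‖² ≤ ∑ |⟪v i, w⟫| ≤ M ‖w‖`. -/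
lemma sum_enorm_sq_le_of_sum_enorm_inner_le {S : Finset ι} {v : ι → V} {M : ℝ≥0∞}
    (h : ∀ w, ∑ i ∈ S, ‖inner 𝕜 (v i) w‖ₑ ≤ M * ‖w‖ₑ) : ∑ i ∈ S, ‖v i‖ₑ ^ 2 ≤ M ^ 2 := by
  obtain ⟨ε, hε⟩ := exists_signs_sum_norm_sq_le 𝕜 S v
  set w := ∑ i ∈ S, ε i • v i with hw
  have sum_le : ∑ i ∈ S, ‖v i‖ₑ ^ 2 ≤ ‖w‖ₑ ^ 2 := by
    simp only [← ofReal_norm, ← ENNReal.ofReal_pow (norm_nonneg _)]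
    rw [← ENNReal.ofReal_sum_of_nonneg fun _ _ => by positivity]
    exact ENNReal.ofReal_le_ofReal hε
  refine sum_le.trans ?_
  rcases eq_or_ne ‖w‖ₑ 0 with h0 | h0
  · simp [h0]
  gcongr
  refine (ENNReal.mul_le_mul_iff_left h0 enorm_ne_top).1 ?_
  calc ‖w‖ₑ * ‖w‖ₑ = ‖inner 𝕜 w w‖ₑ := by
        rw [← ofReal_norm, ← ofReal_norm, ← ENNReal.ofReal_mul (norm_nonneg w),
          ← inner_self_eq_norm_mul_norm (𝕜 := 𝕜), inner_self_re_eq_norm]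
    _ ≤ ∑ i ∈ S, ‖inner 𝕜 (ε i • v i) w‖ₑ := by
        conv_lhs => rw [hw, sum_inner]
        exact enorm_sum_le _ _
    _ = ∑ i ∈ S, ‖inner 𝕜 (v i) w‖ₑ := by
        simp only [← ofReal_norm, norm_inner_units_zsmul_left]
    _ ≤ M * ‖w‖ₑ := h w

lemma tsum_enorm_sq_le_of_dense {D : Set V} (hD : Dense D) {v : ι → V}
    {M : ℝ≥0∞} (h : ∀ w ∈ D, ∑' i, ‖inner 𝕜 (v i) w‖ₑ ≤ M * ‖w‖ₑ) : ∑' i, ‖v i‖ₑ ^ 2 ≤ M ^ 2 := by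
  rcases eq_or_ne M ⊤ with rfl | hM
  · simp
  rw [ENNReal.tsum_eq_iSup_sum]
  refine iSup_le fun S => sum_enorm_sq_le_of_sum_enorm_inner_le (𝕜 := 𝕜) fun w => ?_
  refine hD.induction (P := fun w => ∑ i ∈ S, ‖inner 𝕜 (v i) w‖ₑ ≤ M * ‖w‖ₑ)
    (fun w hw => (ENNReal.sum_le_tsum S).trans (h w hw)) ?_ w
  refine isClosed_le ?_ ((ENNReal.continuous_const_mul hM).comp continuous_enorm)
  exact continuous_finsetSum _ fun i _ => (continuous_const.inner continuous_id).enorm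

end HilbertSpace

section Suprema

lemma eLpNorm_top_eq_iSup_of_continuous {X E : Type*} [TopologicalSpace X] [MeasurableSpace X]
    [TopologicalSpace E] [ContinuousENorm E] {μ : Measure X} [μ.IsOpenPosMeasure] {F : X → E}
    (hF : Continuous F) : eLpNorm F ⊤ μ = ⨆ x, ‖F x‖ₑ := by
  rw [eLpNorm_exponent_top]
  refine le_antisymm (essSup_le_of_ae_le _ (.of_forall fun x => le_iSup (fun x => ‖F x‖ₑ) x))
    (iSup_le fun x => ?_)
  exact (Measure.dense_of_ae (ae_le_eLpNormEssSup (f := F) (μ := μ))).induction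
    (P := fun x => ‖F x‖ₑ ≤ eLpNormEssSup F μ) (fun _ h => h)
    (isClosed_le hF.enorm continuous_const) x

lemma sum_iSup_eq_iSup_sum {ι X : Type*} [Nonempty X] (S : Finset ι) (a : ι → X → ℝ≥0∞) :
    ∑ i ∈ S, ⨆ x, a i x = ⨆ y : ι → X, ∑ i ∈ S, a i (y i) := by
  classical
  have iSup_eval (i : ι) : ⨆ x, a i x = ⨆ y : ι → X, a i (y i) :=
    ((Function.surjective_eval (β := fun _ : ι => X) i).iSup_comp (a i)).symm
  simp only [iSup_eval]
  refine ENNReal.finsetSum_iSup fun y z =>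
    ⟨fun i => if a i (y i) ≤ a i (z i) then z i else y i, fun i => ?_⟩
  grind

lemma tsum_iSup_eq_iSup_tsum {ι X : Type*} [Nonempty X] (a : ι → X → ℝ≥0∞) :
    ∑' i, ⨆ x, a i x = ⨆ y : ι → X, ∑' i, a i (y i) := by
  simp only [ENNReal.tsum_eq_iSup_sum, sum_iSup_eq_iSup_sum]
  exact iSup_comm

end Suprema

section Plancherel

variable {V H : Type*} [NormedAddCommGroup V] [InnerProductSpace ℝ V] [FiniteDimensional ℝ V]
  [MeasurableSpace V] [BorelSpace V] [NormedAddCommGroup H] [InnerProductSpace ℂ H]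
  [CompleteSpace H]

lemma enorm_toLp_fourier_two (g : 𝓢(V, H)) : ‖(𝓕 g).toLp 2 volume‖ₑ = eLpNorm g 2 volume := by
  rw [← ofReal_norm, SchwartzMap.norm_fourier_toL2_eq, ofReal_norm]
  exact Lp.enorm_toLp _

variable (V H) in
lemma denseRange_toLp_fourier_two :
    DenseRange fun g : 𝓢(V, H) => (𝓕 g).toLp 2 (volume : Measure V) :=
  (SchwartzMap.denseRange_toLpCLM (F := H) (p := 2) ENNReal.ofNat_ne_top).comp
    (FourierTransform.fourierEquiv ℂ 𝓢(V, H)).surjective.denseRange (map_continuous _)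

end Plancherel

section Propagator

/-- The symbol of `e^{itΔ} P` carrying the character `e^{2πi x·ξ}`, so that its integral against
`f̂` is `e^{itΔ} P f (x)`. -/
def modulatedSymbol (φ : E2 → ℂ) (t : ℝ) (x ξ : E2) : ℂ :=
  φ ξ * Complex.exp (Complex.I *
    ((2 * Real.pi * ⟪x, ξ⟫ - 4 * Real.pi ^ 2 * t * ‖ξ‖ ^ 2 : ℝ) : ℂ))

variable {φ ψ : E2 → ℂ}

lemma norm_modulatedSymbol (φ : E2 → ℂ) (t : ℝ) (x ξ : E2) :
    ‖modulatedSymbol φ t x ξ‖ = ‖φ ξ‖ := by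
  rw [modulatedSymbol, norm_mul, mul_comm Complex.I, Complex.norm_exp_ofReal_mul_I, mul_one]

lemma aestronglyMeasurable_modulatedSymbol (hφ : AEStronglyMeasurable φ) (t : ℝ) (x : E2) :
    AEStronglyMeasurable (modulatedSymbol φ t x) :=
  hφ.mul (by fun_prop : Continuous _).aestronglyMeasurable

lemma memLp_modulatedSymbol {p : ℝ≥0∞} (hφ : MemLp φ p) (t : ℝ) (x : E2) :
    MemLp (modulatedSymbol φ t x) p :=
  hφ.congr_norm (aestronglyMeasurable_modulatedSymbol hφ.1 t x)
    (.of_forall fun ξ => (norm_modulatedSymbol φ t x ξ).symm)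

lemma integrable_modulatedSymbol (hφ : Integrable φ) (t : ℝ) (x : E2) :
    Integrable (modulatedSymbol φ t x) :=
  memLp_one_iff_integrable.1 (memLp_modulatedSymbol (memLp_one_iff_integrable.2 hφ) t x)

lemma schrodingerKernel_sub (φ : E2 → ℂ) (t : ℝ) (x y : E2) :
    schrodingerKernel φ t (x - y) = 𝓕 (modulatedSymbol φ t x) y := by
  rw [schrodingerKernel, Real.fourier_eq']
  congr 1
  ext ξ
  rw [modulatedSymbol, smul_eq_mul, mul_left_comm, ← Complex.exp_add, inner_sub_left,
    real_inner_comm y ξ]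
  congr 2
  push_cast
  ring

lemma schrodingerProp_eq_integral_fourier (hφ : Integrable φ) {f : E2 → ℂ} (hf : Integrable f)
    (t : ℝ) (x : E2) :
    schrodingerProp φ t f x = ∫ ξ, modulatedSymbol φ t x ξ * 𝓕 f ξ := by
  simp only [schrodingerProp, schrodingerKernel_sub]
  simpa only [flip_innerₗ] using! VectorFourier.integral_fourierIntegral_smul_eq_flip
    (L := innerₗ E2) Real.continuous_fourierChar continuous_inner
    (integrable_modulatedSymbol hφ t x) hf

lemma continuous_schrodingerProp (hφ : Integrable φ) {f : E2 → ℂ} (hf : Integrable f) (t : ℝ) :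
    Continuous (schrodingerProp φ t f) := by
  have hf_cont : Continuous (𝓕 f) := VectorFourier.fourierIntegral_continuous
    (L := innerₗ E2) Real.continuous_fourierChar continuous_inner hf
  rw [funext (schrodingerProp_eq_integral_fourier hφ hf t)]
  refine continuous_of_dominated (bound := fun ξ => ‖φ ξ‖ * ∫ y, ‖f y‖)
    (fun x => (aestronglyMeasurable_modulatedSymbol hφ.1 t x).mul hf_cont.aestronglyMeasurable)
    (fun x => .of_forall fun ξ => ?_) (hφ.norm.mul_const _) (.of_forall fun ξ => ?_)
  · rw [norm_mul, norm_modulatedSymbol]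
    gcongr
    exact VectorFourier.norm_fourierIntegral_le_integral_norm _ _ _ _ _
  · unfold modulatedSymbol
    fun_prop

/-- The vector of `L²` representing, on the frequency side, the functional
`ĝ ↦ e^{itΔ} P g (x)`; the conjugate is there because `inner` is conjugate-linear in its first
argument. -/
def symbolPacket (hψ : MemLp ψ 2) (t : ℝ) (x : E2) : Lp ℂ 2 (volume : Measure E2) :=
  (memLp_modulatedSymbol hψ t x).star.toLp

lemma enorm_symbolPacket (hψ : MemLp ψ 2) (t : ℝ) (x : E2) :
    ‖symbolPacket hψ t x‖ₑ = eLpNorm ψ 2 volume := by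
  rw [symbolPacket, Lp.enorm_toLp]
  refine eLpNorm_congr_norm_ae (.of_forall fun ξ => ?_)
  rw [Pi.star_apply, norm_star, norm_modulatedSymbol]

lemma inner_symbolPacket_fourier (hψ1 : Integrable ψ) (hψ2 : MemLp ψ 2) (t : ℝ) (x : E2)
    (g : 𝓢(E2, ℂ)) :
    inner ℂ (symbolPacket hψ2 t x) ((𝓕 g).toLp 2 volume) = schrodingerProp ψ t g x := by
  rw [schrodingerProp_eq_integral_fourier hψ1 g.integrable, L2.inner_def]
  refine integral_congr_ae ?_
  filter_upwards [(memLp_modulatedSymbol hψ2 t x).star.coeFn_toLp,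
    (𝓕 g).coeFn_toLp 2 volume] with ξ h_packet h_fourier
  rw [symbolPacket, h_packet, h_fourier, SchwartzMap.fourier_coe]
  simp [mul_comm]

variable {ι : Type*} {t : ι → ℝ} {u : ι → E2 → ℂ} {M : ℝ≥0∞}

lemma tsum_enorm_sq_mul_eLpNorm_sq_le (hψ1 : Integrable ψ) (hψ2 : MemLp ψ 2)
    (hu : ∀ n, Continuous (u n))
    (H : ∀ g : 𝓢(E2, ℂ),
      ∑' n, eLpNorm (fun x => u n x * schrodingerProp ψ (t n) g x) ⊤ volume
        ≤ M * eLpNorm g 2 volume) (x : ι → E2) :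
    (∑' n, ‖u n (x n)‖ₑ ^ 2) * eLpNorm ψ 2 volume ^ 2 ≤ M ^ 2 := by
  let v (n : ι) : Lp ℂ 2 (volume : Measure E2) := star (u n (x n)) • symbolPacket hψ2 (t n) (x n)
  have enorm_v (n : ι) : ‖v n‖ₑ ^ 2 = ‖u n (x n)‖ₑ ^ 2 * eLpNorm ψ 2 volume ^ 2 := by
    rw [enorm_smul, enorm_symbolPacket, ← ofReal_norm, norm_star, ofReal_norm, mul_pow]
  rw [← ENNReal.tsum_mul_right, ← tsum_congr enorm_v]
  refine tsum_enorm_sq_le_of_dense (𝕜 := ℂ) (denseRange_toLp_fourier_two E2 ℂ) ?_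
  rintro _ ⟨g, rfl⟩
  rw [enorm_toLp_fourier_two]
  refine le_trans (ENNReal.tsum_le_tsum fun n => ?_) (H g)
  rw [inner_smul_left, inner_symbolPacket_fourier hψ1]
  have h_cont : Continuous fun x => u n x * schrodingerProp ψ (t n) g x :=
    (hu n).mul (continuous_schrodingerProp hψ1 g.integrable (t n))
  rw [eLpNorm_top_eq_iSup_of_continuous h_cont]
  simpa using le_iSup (fun x => ‖u n x * schrodingerProp ψ (t n) g x‖ₑ) (x n)

lemma tsum_eLpNorm_top_sq_mul_eLpNorm_sq_le (hψ1 : Integrable ψ) (hψ2 : MemLp ψ 2)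
    (hu : ∀ n, Continuous (u n))
    (H : ∀ g : 𝓢(E2, ℂ),
      ∑' n, eLpNorm (fun x => u n x * schrodingerProp ψ (t n) g x) ⊤ volume
        ≤ M * eLpNorm g 2 volume) :
    (∑' n, eLpNorm (u n) ⊤ volume ^ 2) * eLpNorm ψ 2 volume ^ 2 ≤ M ^ 2 := by
  simp only [fun n => eLpNorm_top_eq_iSup_of_continuous (μ := volume) (hu n), ENNReal.iSup_pow,
    tsum_iSup_eq_iSup_tsum, ENNReal.iSup_mul]
  exact iSup_le (tsum_enorm_sq_mul_eLpNorm_sq_le hψ1 hψ2 hu H)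

end Propagator

namespace IsCinfc

variable {φ : E2 → ℂ}

lemma memLp (hφ : IsCinfc φ) (p : ℝ≥0∞) : MemLp φ p :=
  hφ.1.continuous.memLp_of_hasCompactSupport hφ.2

lemma integrable (hφ : IsCinfc φ) : Integrable φ :=
  hφ.1.continuous.integrable_of_hasCompactSupport hφ.2

lemma ae_eq_zero_iff (hφ : IsCinfc φ) : φ =ᵐ[volume] 0 ↔ φ = 0 :=
  Continuous.ae_eq_iff_eq volume hφ.1.continuous continuous_zero

end IsCinfc

theorem discretized_linear_bound_from_bilinear_general
    {φ φ' : E2 → ℂ} (hφ : Integrable φ) (hφ'1 : Integrable φ') (hφ'2 : MemLp φ' 2)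
    (hφ'0 : ¬ φ' =ᵐ[volume] 0) {ι : Type*} (t : ι → ℝ)
    (H : ∃ C : ℝ, 0 < C ∧ ∀ f g : 𝓢(E2, ℂ),
      (∑' n, eLpNorm (fun x => schrodingerProp φ (t n) f x * schrodingerProp φ' (t n) g x)
          ⊤ volume)
        ≤ ENNReal.ofReal C * eLpNorm f 2 volume * eLpNorm g 2 volume) :
    ∃ C' : ℝ, 0 < C' ∧ ∀ f : 𝓢(E2, ℂ),
      (∑' n, (eLpNorm (fun x => schrodingerProp φ (t n) f x) ⊤ volume) ^ (2 : ℝ)) ^ (1 / 2 : ℝ)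
        ≤ ENNReal.ofReal C' * eLpNorm f 2 volume := by
  obtain ⟨C, hC, H⟩ := H
  have h_ne_zero : eLpNorm φ' 2 volume ≠ 0 := mt (eLpNorm_eq_zero_iff hφ'2.1 two_ne_zero).1 hφ'0
  have h_ne_top : eLpNorm φ' 2 volume ≠ ⊤ := hφ'2.eLpNorm_ne_top
  have h_pos : 0 < (eLpNorm φ' 2 volume).toReal := ENNReal.toReal_pos h_ne_zero h_ne_top
  refine ⟨C / (eLpNorm φ' 2 volume).toReal, by positivity, fun f => ?_⟩
  have sum_mul_le := tsum_eLpNorm_top_sq_mul_eLpNorm_sq_le hφ'1 hφ'2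
    (fun n => continuous_schrodingerProp hφ f.integrable (t n)) (H f)
  have sum_le := (ENNReal.le_div_iff_mul_le (.inl (pow_ne_zero 2 h_ne_zero))
    (.inl (ENNReal.pow_ne_top h_ne_top))).2 sum_mul_le
  rw [one_div, ENNReal.rpow_inv_le_iff two_pos, ENNReal.ofReal_div_of_pos h_pos,
    ENNReal.ofReal_toReal h_ne_top, ENNReal.mul_comm_div, ← mul_div_assoc,
    ENNReal.div_rpow_of_nonneg _ _ two_pos.le]
  simpa only [ENNReal.rpow_ofNat] using sum_le

/-- **From the discretized bilinear bound to the discretized linear bound.**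
Let `φ'` be not identically zero.  If
`Σ_{n∈ℤ} ‖(e^{inΔ} P f)(e^{inΔ} P' g)‖_{L^∞(ℝ²)} ≤ C ‖f‖₂ ‖g‖₂` for all Schwartz `f, g`,
then there is `C' > 0` with
`(Σ_{n∈ℤ} ‖e^{inΔ} P f‖_{L^∞(ℝ²)}²)^{1/2} ≤ C' ‖f‖₂` for all Schwartz `f`. -/
theorem discretized_linear_bound_from_bilinear
    (φ φ' : E2 → ℂ) (hφ : IsCinfc φ) (hφ' : IsCinfc φ') (hφ'0 : φ' ≠ 0)
    (H : ∃ C : ℝ, 0 < C ∧ ∀ f g : 𝓢(E2, ℂ),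
      (∑' n : ℤ,
          eLpNorm (fun x => schrodingerProp φ (n : ℝ) (⇑f) x *
            schrodingerProp φ' (n : ℝ) (⇑g) x) ⊤ volume)
        ≤ ENNReal.ofReal C * eLpNorm (⇑f) 2 volume * eLpNorm (⇑g) 2 volume) :
    ∃ C' : ℝ, 0 < C' ∧ ∀ f : 𝓢(E2, ℂ),
      (∑' n : ℤ,
          (eLpNorm (fun x => schrodingerProp φ (n : ℝ) (⇑f) x) ⊤ volume) ^ (2 : ℝ)) ^ (1 / 2 : ℝ)
        ≤ ENNReal.ofReal C' * eLpNorm (⇑f) 2 volume :=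
  discretized_linear_bound_from_bilinear_general hφ.integrable hφ'.integrable (hφ'.memLp 2)
    (hφ'.ae_eq_zero_iff.not.2 hφ'0) (fun n : ℤ => (n : ℝ)) H
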